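/- arXiv:0705.2404 — 2 statements merged into one kernel-verified Lean document; each statement's English description precedes it below -/
import Mathlib

section
/- For every position G of the octal game 0.26 (including the empty position), G is a misère P-position if and only if Φ(G) ∈ P. -/
/-!
Give the generators `a`, `b`, `c n` the weights `0`, `1`, `n + 2` and the levels `0`, `0`,
`2 * n + 3`, and record for a word the exponent `e` of `a`, the total weight `w` and the largest
level `M`. The defining relations preserve `e` modulo `2`, `w` and `max M w` (`conGen_le_invCon`),
and conversely they reduce every word to `a ^ e * b ^ w` when `M ≤ w` and to `a ^ e * b ^ m * c n`
with `m ≤ n` when `w < M` (`toQ_normal`). So an element lies in the P-portion exactly when it is `a`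
(`e` odd, `w = 0`), or `e` is even and either `w` is even, positive and `M ≤ w`, or `w` is odd and
`w < M` (`toQ_mem_P026`).

For a position, `e` counts the even heaps. Taking one bean and splitting change the parity of `e`,
while replacing `k` by `k - 2` keeps it and changes `w` by exactly one. Levels are zero or odd, so a
change of `w` by one cannot be compensated by a change in the comparison of `M` with `w`; this shows
that no move joins two P-values (`not_posP_of_move`). Conversely, from any other value of a position
that admits a move some option has a P-value (`win_of_not_posP`). The cases are given by the
parities of `e` and `w` and by the comparison of `M` with `w`; the winning move is found in a heap
of largest level, in another heap of positive weight, or in an even heap. The theorem follows by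
induction on the number of beans.
-/

/-- One legal move in the octal game 0.26. -/
def Move026 (G G' : Multiset ℕ) : Prop :=
  (∃ k ∈ G, 2 ≤ k ∧ G' = (k - 1) ::ₘ G.erase k) ∨
  (∃ k ∈ G, 3 ≤ k ∧ G' = (k - 2) ::ₘ G.erase k) ∨
  (∃ k ∈ G, 4 ≤ k ∧ ∃ i j : ℕ, 1 ≤ i ∧ 1 ≤ j ∧ i + j = k - 2 ∧
    G' = i ::ₘ j ::ₘ G.erase k)

/-- Generators of the misère quotient of 0.26: `a`, `b`, and `c n` for `n : ℕ`. -/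
inductive Gen026 where
  | a : Gen026
  | b : Gen026
  | c : ℕ → Gen026

/-- The free commutative monoid on the generators, written multiplicatively. -/
abbrev FM026 := Multiplicative (Multiset Gen026)

/-- The generator `x` as an element of the free commutative monoid. -/
def fgen026 (x : Gen026) : FM026 := Multiplicative.ofAdd {x}

def fa : FM026 := fgen026 .a
def fb : FM026 := fgen026 .b
def fc (n : ℕ) : FM026 := fgen026 (.c n)

/-- The defining relations of the quotient `Q`:
`a² = 1`, `b^(n+1) c_n = b^(2n+3)`, and `c_m c_n = b^(m+2) c_n` for `m ≤ n`. -/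
def rel026 : FM026 → FM026 → Prop := fun x y =>
  (x = fa ^ 2 ∧ y = 1) ∨
  (∃ n : ℕ, x = fb ^ (n + 1) * fc n ∧ y = fb ^ (2 * n + 3)) ∨
  (∃ m n : ℕ, m ≤ n ∧ x = fc m * fc n ∧ y = fb ^ (m + 2) * fc n)

/-- The commutative monoid `Q` presented by generators `a`, `b`, `c_n` and the
relations `rel026`. -/
def Q026 : Type := (conGen rel026).Quotient

instance : CommMonoid Q026 := Con.commMonoid _

/-- The image of `a` in `Q`. -/
def qa : Q026 := (conGen rel026).mk' fa
/-- The image of `b` in `Q`. -/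
def qb : Q026 := (conGen rel026).mk' fb
/-- The image of `c_n` in `Q`. -/
def qc (n : ℕ) : Q026 := (conGen rel026).mk' (fc n)

/-- The P-portion `P = {a} ∪ {b^(2m) : m ≥ 1} ∪ {b^m c_n : m ≤ n, m + n odd}`. -/
def P026 : Set Q026 :=
  {x | x = qa} ∪
  {x | ∃ m : ℕ, 1 ≤ m ∧ x = qb ^ (2 * m)} ∪
  {x | ∃ m n : ℕ, m ≤ n ∧ (m + n) % 2 = 1 ∧ x = qb ^ m * qc n}

/-- The pretending function on single heaps. -/
noncomputable def phi026 (k : ℕ) : Q026 :=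
  if k ≤ 8 then
    (if k % 4 = 1 then 1 else if k % 4 = 2 then qa
     else if k % 4 = 3 then qb else qa * qb)
  else if k = 9 then qc 0
  else if k = 10 then qa * qc 0
  else if k % 2 = 1 then qc ((k - 9) / 2)
  else qa * qb * qc ((k - 12) / 2)

/-- The pretending function extended multiplicatively to positions. -/
noncomputable def Phi026 (G : Multiset ℕ) : Q026 := (G.map phi026).prod

/-! ### Numerical outcome criterion -/

/-- Number of factors `a` in the value of a heap of size `k`. -/
def heapE (k : ℕ) : ℕ := (k + 1) % 2

/-- Weight of the value of a heap of size `k`, where `a`, `b`, `c n` weigh `0`, `1`, `n + 2`. -/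
def heapW (k : ℕ) : ℕ :=
  if k ≤ 8 then (if k % 4 = 3 ∨ k % 4 = 0 then 1 else 0) else (k - 5) / 2

/-- Level of the value of a heap of size `k`, where `a`, `b`, `c n` have levels `0`, `0`,
`2 * n + 3`. -/
def heapM (k : ℕ) : ℕ :=
  if k ≤ 8 then 0 else if k = 10 then 3 else if k % 2 = 1 then k - 6 else k - 9

/-- The P-portion of `Q` in terms of the exponent `e` of `a`, the weight `w` and the level `M`. -/
def NumP (e w M : ℕ) : Prop :=
  (e % 2 = 1 ∧ w = 0) ∨
  (e % 2 = 0 ∧ ((w % 2 = 0 ∧ 1 ≤ w ∧ M ≤ w) ∨ (w % 2 = 1 ∧ w < M)))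

/-- Exponent of `a` in the value of a position. -/
def posE (G : Multiset ℕ) : ℕ := (G.map heapE).sum

/-- Total weight of a position. -/
def posW (G : Multiset ℕ) : ℕ := (G.map heapW).sum

/-- Level of a position: the largest level of its heaps. -/
def posM (G : Multiset ℕ) : ℕ := (G.map heapM).sup

/-- The numerical form of `Phi026 G ∈ P026`. -/
def PosP (G : Multiset ℕ) : Prop := NumP (posE G) (posW G) (posM G)

lemma posE_cons (k : ℕ) (R : Multiset ℕ) : posE (k ::ₘ R) = heapE k + posE R := by simp [posE]
lemma posW_cons (k : ℕ) (R : Multiset ℕ) : posW (k ::ₘ R) = heapW k + posW R := by simp [posW]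
lemma posM_cons (k : ℕ) (R : Multiset ℕ) : posM (k ::ₘ R) = max (heapM k) (posM R) := by
  simp [posM]

lemma posP_cons (k : ℕ) (R : Multiset ℕ) :
    PosP (k ::ₘ R) ↔
      NumP (heapE k + posE R) (heapW k + posW R) (max (heapM k) (posM R)) := by
  rw [PosP, posE_cons, posW_cons, posM_cons]

lemma posP_cons_cons (i j : ℕ) (R : Multiset ℕ) :
    PosP (i ::ₘ j ::ₘ R) ↔
      NumP (heapE i + (heapE j + posE R)) (heapW i + (heapW j + posW R))
        (max (heapM i) (max (heapM j) (posM R))) := by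
  rw [posP_cons, posE_cons, posW_cons, posM_cons]

/-- The values of `heapW` and `heapM` in a form suited to linear arithmetic. -/
lemma heap_spec (k : ℕ) (hk : 1 ≤ k) :
    (k ≤ 6 ∧ 1 ≤ k % 4 ∧ k % 4 ≤ 2 ∧ heapW k = 0 ∧ heapM k = 0) ∨
    (3 ≤ k ∧ k ≤ 8 ∧ (k + 1) % 4 ≤ 1 ∧ heapW k = 1 ∧ heapM k = 0) ∨
    (k = 10 ∧ heapW k = 2 ∧ heapM k = 3) ∨
    (9 ≤ k ∧ k % 2 = 1 ∧ 2 * heapW k + 5 = k ∧ heapM k + 6 = k) ∨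
    (12 ≤ k ∧ k % 2 = 0 ∧ 2 * heapW k + 6 = k ∧ heapM k + 9 = k) := by
  unfold heapW heapM
  split_ifs <;> omega

lemma numP_a {e w M : ℕ} (he : e % 2 = 1) (hw : w = 0) : NumP e w M := Or.inl ⟨he, hw⟩

lemma numP_low {e w M : ℕ} (he : e % 2 = 0) (hw : w % 2 = 0 ∧ 1 ≤ w ∧ M ≤ w) : NumP e w M :=
  Or.inr ⟨he, Or.inl hw⟩

lemma numP_high {e w M : ℕ} (he : e % 2 = 0) (hw : w % 2 = 1 ∧ w < M) : NumP e w M :=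
  Or.inr ⟨he, Or.inr hw⟩

/-- Levels are zero or odd, and bounded in terms of the weight; in particular weight zero forces
level zero. -/
lemma pos_spec (R : Multiset ℕ) :
    (∀ k ∈ R, 1 ≤ k) → (posM R = 0 ∨ posM R % 2 = 1) ∧ posM R ≤ 2 * posW R - 1 := by
  induction R using Multiset.induction_on with
  | empty => intro _; simp [posM, posW]
  | cons k R ih =>
    intro h
    have h1 := ih fun x hx => h x (Multiset.mem_cons_of_mem hx)
    have h2 := heap_spec k (h k (Multiset.mem_cons_self k R))
    rw [posW_cons, posM_cons]
    omega

/-! ### Moves from P-values -/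

lemma not_numP_one (k e w M : ℕ) (hk : 2 ≤ k)
    (hR : (M = 0 ∨ M % 2 = 1) ∧ M ≤ 2 * w - 1)
    (h : NumP (heapE k + e) (heapW k + w) (max (heapM k) M)) :
    ¬ NumP (heapE (k - 1) + e) (heapW (k - 1) + w) (max (heapM (k - 1)) M) := by
  have h1 := heap_spec k (by omega)
  have h2 := heap_spec (k - 1) (by omega)
  unfold NumP heapE at *
  rcases h1 with h1 | h1 | h1 | h1 | h1 <;>
    rcases h2 with h2 | h2 | h2 | h2 | h2 <;> omega

lemma not_numP_two (k e w M : ℕ) (hk : 3 ≤ k)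
    (hR : (M = 0 ∨ M % 2 = 1) ∧ M ≤ 2 * w - 1)
    (h : NumP (heapE k + e) (heapW k + w) (max (heapM k) M)) :
    ¬ NumP (heapE (k - 2) + e) (heapW (k - 2) + w) (max (heapM (k - 2)) M) := by
  have h1 := heap_spec k (by omega)
  have h2 := heap_spec (k - 2) (by omega)
  unfold NumP heapE at *
  rcases h1 with h1 | h1 | h1 | h1 | h1 <;>
    rcases h2 with h2 | h2 | h2 | h2 | h2 <;> omega

lemma not_numP_split (k i j e w M : ℕ) (hi : 1 ≤ i) (hj : 1 ≤ j) (hk : i + j + 2 = k)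
    (hR : (M = 0 ∨ M % 2 = 1) ∧ M ≤ 2 * w - 1)
    (h : NumP (heapE k + e) (heapW k + w) (max (heapM k) M)) :
    ¬ NumP (heapE i + (heapE j + e)) (heapW i + (heapW j + w))
        (max (heapM i) (max (heapM j) M)) := by
  have h1 := heap_spec k (by omega)
  have h2 := heap_spec i hi
  have h3 := heap_spec j hj
  -- A split changes the parity of the number of even heaps.
  have hpar : (heapE i + (heapE j + e)) % 2 = (heapE k + e + 1) % 2 := by
    unfold heapE; omega
  intro hP
  unfold NumP at hP h
  -- Hence at least one of the two values is `a`, which leaves finitely many heap sizes.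
  rcases h with ⟨he, hw⟩ | ⟨he, h⟩
  · have hk6 : k ≤ 6 := by
      clear h2 h3 hP hpar
      rcases h1 with h1 | h1 | h1 | h1 | h1 <;> omega
    have hi4 : i ≤ 3 := by omega
    have hj4 : j ≤ 3 := by omega
    clear h1
    rcases h2 with h2 | h2 | h2 | h2 | h2 <;>
      rcases h3 with h3 | h3 | h3 | h3 | h3 <;> omega
  · have hz : heapW i = 0 ∧ heapW j = 0 ∧ w = 0 := by
      clear h1 h2 h3 h
      omega
    have hi6 : i ≤ 6 ∧ 1 ≤ i % 4 ∧ i % 4 ≤ 2 := by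
      clear h hP h1 h3
      rcases h2 with h2 | h2 | h2 | h2 | h2 <;> omega
    have hj6 : j ≤ 6 ∧ 1 ≤ j % 4 ∧ j % 4 ≤ 2 := by
      clear h hP h1 h2
      rcases h3 with h3 | h3 | h3 | h3 | h3 <;> omega
    clear h2 h3 hP hpar
    rcases h1 with h1 | h1 | h1 | h1 | h1 <;> omega

/-- No move leads from a P-value to a P-value. -/
lemma not_posP_of_move {G G' : Multiset ℕ} (hpos : ∀ k ∈ G, 1 ≤ k) (h : PosP G)
    (hm : Move026 G G') : ¬ PosP G' := by
  have key : ∀ k ∈ G, ∃ R, G = k ::ₘ R ∧ G.erase k = R ∧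
      (posM R = 0 ∨ posM R % 2 = 1) ∧ posM R ≤ 2 * posW R - 1 := fun k hk =>
    ⟨G.erase k, (Multiset.cons_erase hk).symm, rfl,
      pos_spec _ fun x hx => hpos x (Multiset.mem_of_mem_erase hx)⟩
  rcases hm with ⟨k, hk, h2, rfl⟩ | ⟨k, hk, h2, rfl⟩ | ⟨k, hk, h2, i, j, hi, hj, hij, rfl⟩
  all_goals
    obtain ⟨R, hG, hE, hR⟩ := key k hk
    rw [hE]
    rw [hG, posP_cons] at h
  · rw [posP_cons]
    exact not_numP_one k _ _ _ h2 hR h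
  · rw [posP_cons]
    exact not_numP_two k _ _ _ h2 hR h
  · rw [posP_cons_cons]
    exact not_numP_split k i j _ _ _ hi hj (by omega) hR h

/-! ### Winning moves from N-values -/

/-- Some option of `G` has a P-value. -/
def Win (G : Multiset ℕ) : Prop := ∃ G', Move026 G G' ∧ PosP G'

lemma win_one (k : ℕ) (R : Multiset ℕ) (hk : 2 ≤ k)
    (h : NumP (heapE (k - 1) + posE R) (heapW (k - 1) + posW R) (max (heapM (k - 1)) (posM R))) :
    Win (k ::ₘ R) :=
  ⟨(k - 1) ::ₘ R, Or.inl ⟨k, by simp, hk, by simp⟩, (posP_cons _ _).2 h⟩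

lemma win_two (k : ℕ) (R : Multiset ℕ) (hk : 3 ≤ k)
    (h : NumP (heapE (k - 2) + posE R) (heapW (k - 2) + posW R) (max (heapM (k - 2)) (posM R))) :
    Win (k ::ₘ R) :=
  ⟨(k - 2) ::ₘ R, Or.inr (Or.inl ⟨k, by simp, hk, by simp⟩), (posP_cons _ _).2 h⟩

lemma win_split (k i j : ℕ) (R : Multiset ℕ) (hi : 1 ≤ i) (hj : 1 ≤ j) (hk : i + j + 2 = k)
    (h : NumP (heapE i + (heapE j + posE R)) (heapW i + (heapW j + posW R))
      (max (heapM i) (max (heapM j) (posM R)))) :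
    Win (k ::ₘ R) :=
  ⟨i ::ₘ j ::ₘ R, Or.inr (Or.inr ⟨k, by simp, by omega, i, j, hi, hj, by omega, by simp⟩),
    (posP_cons_cons _ _ _).2 h⟩

lemma exists_heapW_pos {G : Multiset ℕ} (h : 0 < posW G) : ∃ k ∈ G, 0 < heapW k := by
  by_contra! hc
  have : posW G = 0 := by
    unfold posW
    apply Multiset.sum_eq_zero
    intro x hx
    obtain ⟨k, hk, rfl⟩ := Multiset.mem_map.1 hx
    have := hc k hk
    omega
  omega

lemma exists_even {G : Multiset ℕ} (h : posE G % 2 = 1) : ∃ k ∈ G, k % 2 = 0 := by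
  by_contra! hc
  have : posE G = 0 := by
    unfold posE
    apply Multiset.sum_eq_zero
    intro x hx
    obtain ⟨k, hk, rfl⟩ := Multiset.mem_map.1 hx
    have := hc k hk
    unfold heapE
    omega
  omega

lemma exists_posM (G : Multiset ℕ) : posM G = 0 ∨ ∃ k ∈ G, heapM k = posM G := by
  induction G using Multiset.induction_on with
  | empty => left; simp [posM]
  | cons k R ih =>
    rw [posM_cons]
    by_cases hk : posM R ≤ heapM k
    · exact Or.inr ⟨k, by simp, by omega⟩
    · rcases ih with h | ⟨x, hx, hxM⟩
      · omega
      · exact Or.inr ⟨x, by simp [hx], by omega⟩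

/-- A position of positive weight has a heap of positive weight whose level is largest. -/
lemma exists_top {G : Multiset ℕ} (hpos : ∀ k ∈ G, 1 ≤ k) (h : 0 < posW G) :
    ∃ k R, G = k ::ₘ R ∧ 0 < heapW k ∧ posM R ≤ heapM k := by
  have aux : ∃ k ∈ G, 0 < heapW k ∧ heapM k = posM G := by
    rcases exists_posM G with h0 | ⟨k, hk, hM⟩
    · obtain ⟨k, hk, hw⟩ := exists_heapW_pos h
      obtain ⟨R, rfl⟩ := Multiset.exists_cons_of_mem hk
      rw [posM_cons] at h0
      exact ⟨k, hk, hw, by rw [posM_cons]; omega⟩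
    · by_cases hw : 0 < heapW k
      · exact ⟨k, hk, hw, hM⟩
      · have hs := heap_spec k (hpos k hk)
        obtain ⟨x, hx, hxw⟩ := exists_heapW_pos h
        refine ⟨x, hx, hxw, ?_⟩
        obtain ⟨R, rfl⟩ := Multiset.exists_cons_of_mem hx
        rw [posM_cons] at hM ⊢
        omega
  obtain ⟨k, hk, hw, hM⟩ := aux
  obtain ⟨R, rfl⟩ := Multiset.exists_cons_of_mem hk
  rw [posM_cons] at hM
  exact ⟨k, R, rfl, hw, by omega⟩

/-- Weight zero: some heap `2`, `5` or `6` can be moved so as to reach the value `a`. -/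
lemma win_of_weight_zero {G : Multiset ℕ} (hpos : ∀ k ∈ G, 1 ≤ k) (he : posE G % 2 = 0)
    (hw : posW G = 0) (hm : ∃ k ∈ G, 2 ≤ k) : Win G := by
  obtain ⟨k, hk, hk2⟩ := hm
  obtain ⟨R, rfl⟩ := Multiset.exists_cons_of_mem hk
  have hs := heap_spec k (hpos k hk)
  rw [posE_cons] at he
  rw [posW_cons] at hw
  have hR : posW R = 0 := by omega
  have hcases : k = 2 ∨ k = 5 ∨ k = 6 := by omega
  rcases hcases with rfl | rfl | rfl
  · exact win_one _ _ (by omega) (Or.inl (by simp [heapE, heapW, hR] at he ⊢; omega))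
  · exact win_split _ 1 2 _ (by omega) (by omega) rfl
      (Or.inl (by simp [heapE, heapW, hR] at he ⊢; omega))
  · exact win_one _ _ (by omega) (Or.inl (by simp [heapE, heapW, hR] at he ⊢; omega))

/-- `e` even, `w` odd, `M ≤ w`: lower the weight of the top heap by one, or reach `a`. -/
lemma win_even_odd {G : Multiset ℕ} (hpos : ∀ k ∈ G, 1 ≤ k) (he : posE G % 2 = 0)
    (hw : posW G % 2 = 1) (hM : posM G ≤ posW G) : Win G := by
  obtain ⟨k, R, rfl, hk, hMR⟩ := exists_top hpos (by omega)
  have hk1 := hpos k (by simp)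
  have hs := heap_spec k hk1
  have hR := pos_spec R fun x hx => hpos x (by simp [hx])
  rw [posE_cons] at he
  rw [posW_cons] at hw hM
  rw [posM_cons] at hM
  by_cases h1 : heapW k + posW R = 1
  · have hodd : k = 3 ∨ k = 7 ∨ k = 4 ∨ k = 8 := by omega
    have hR0 : posW R = 0 := by omega
    rcases hodd with rfl | rfl | rfl | rfl
    · exact win_one _ _ (by omega) (Or.inl (by simp [heapE, heapW, hR0] at he ⊢; omega))
    · exact win_one _ _ (by omega) (Or.inl (by simp [heapE, heapW, hR0] at he ⊢; omega))
    · exact win_split _ 1 1 _ (by omega) (by omega) rfl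
        (Or.inl (by simp [heapE, heapW, hR0] at he ⊢; omega))
    · exact win_split _ 1 5 _ (by omega) (by omega) rfl
        (Or.inl (by simp [heapE, heapW, hR0] at he ⊢; omega))
  · by_cases h12 : k = 12 ∧ posW R = 0
    · obtain ⟨rfl, hR0⟩ := h12
      exact win_split _ 5 5 _ (by omega) (by omega) rfl
        (Or.inl (by simp [heapE, heapW, hR0] at he ⊢; omega))
    · have hs' := heap_spec (k - 2) (by omega)
      refine win_two _ _ (by omega) ?_
      unfold heapE at *
      refine numP_low (by omega) ?_
      rcases hs with hs | hs | hs | hs | hs <;>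
        rcases hs' with hs' | hs' | hs' | hs' | hs' <;> omega

/-- `e` even, `w` even, `w < M`: lower the weight of a heap other than the top one; if the top heap
is alone in having weight, lower its weight, or reach `a` from `9`, `10` or `14`. -/
lemma win_even_even {G : Multiset ℕ} (hpos : ∀ k ∈ G, 1 ≤ k) (he : posE G % 2 = 0)
    (hw : posW G % 2 = 0) (hw0 : 0 < posW G) (hM : posW G < posM G) : Win G := by
  obtain ⟨k, R, rfl, hk, hMR⟩ := exists_top hpos hw0
  have hk1 := hpos k (by simp)
  have hs := heap_spec k hk1
  rw [posE_cons] at he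
  rw [posW_cons] at hw hM
  rw [posM_cons] at hM
  by_cases hR0 : posW R = 0
  · have hR := pos_spec R fun x hx => hpos x (by simp [hx])
    by_cases h9 : k = 9
    · subst h9
      exact win_split _ 1 6 _ (by omega) (by omega) rfl
        (Or.inl (by simp [heapE, heapW, hR0] at he ⊢; omega))
    by_cases h10 : k = 10
    · subst h10
      exact win_split _ 2 6 _ (by omega) (by omega) rfl
        (Or.inl (by simp [heapE, heapW, hR0] at he ⊢; omega))
    by_cases h14 : k = 14
    · subst h14
      exact win_split _ 6 6 _ (by omega) (by omega) rfl
        (Or.inl (by simp [heapE, heapW, hR0] at he ⊢; omega))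
    have hs' := heap_spec (k - 2) (by omega)
    refine win_two _ _ (by omega) ?_
    unfold heapE at *
    refine numP_high (by omega) ?_
    rcases hs with hs | hs | hs | hs | hs <;>
      rcases hs' with hs' | hs' | hs' | hs' | hs' <;> omega
  · obtain ⟨j, hj, hjw⟩ := exists_heapW_pos (G := R) (by omega)
    obtain ⟨S, rfl⟩ := Multiset.exists_cons_of_mem hj
    have hj1 := hpos j (by simp)
    have hsj := heap_spec j hj1
    rw [Multiset.cons_swap]
    rw [posE_cons] at he
    rw [posW_cons] at hw hM
    rw [posM_cons] at hM hMR
    have hs' := heap_spec (j - 2) (by omega)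
    refine win_two _ _ (by omega) ?_
    rw [posE_cons, posW_cons, posM_cons]
    unfold heapE at *
    refine numP_high (by omega) ?_
    clear hs
    rcases hsj with hs | hs | hs | hs | hs <;>
      rcases hs' with hs' | hs' | hs' | hs' | hs' <;> omega

/-- `e` odd, `w` even, `M ≤ w`: take one bean from an even heap; if this would raise the level above
the weight, split off a heap of size `2` instead. -/
lemma win_odd_even_low {G : Multiset ℕ} (hpos : ∀ k ∈ G, 1 ≤ k) (he : posE G % 2 = 1)
    (hw : posW G % 2 = 0) (hw0 : 0 < posW G) (hM : posM G ≤ posW G) : Win G := by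
  obtain ⟨k, hk, hk2⟩ := exists_even he
  have hk1 := hpos k hk
  obtain ⟨R, rfl⟩ := Multiset.exists_cons_of_mem hk
  have hs := heap_spec k hk1
  have hR := pos_spec R fun x hx => hpos x (by simp [hx])
  rw [posE_cons] at he
  rw [posW_cons] at hw hM hw0
  rw [posM_cons] at hM
  by_cases h : heapM (k - 1) ≤ heapW k + posW R
  · have hs' := heap_spec (k - 1) (by omega)
    refine win_one _ _ (by omega) ?_
    unfold heapE at *
    refine numP_low (by omega) ?_
    rcases hs with hs | hs | hs | hs | hs <;>
      rcases hs' with hs' | hs' | hs' | hs' | hs' <;> omega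
  · have hs' := heap_spec (k - 1) (by omega)
    have hk12 : 12 ≤ k := by omega
    have hkw : heapM k + 1 = heapW k + posW R := by omega
    have hs'' := heap_spec (k - 4) (by omega)
    have h2 := heap_spec 2 (by omega)
    refine win_split _ 2 (k - 4) _ (by omega) (by omega) (by omega) ?_
    unfold heapE at *
    refine numP_low (by omega) ?_
    rcases hs with hs | hs | hs | hs | hs <;>
      rcases hs'' with hs' | hs' | hs' | hs' | hs' <;> omega

/-- `e` odd, `w` even, `w < M`: lower by one the weight of a heap other than the top one; if the top
heap is alone in having weight, lower its weight, or reach `b ^ 2` from `9`, `10` or `13`. -/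
lemma win_odd_even_high {G : Multiset ℕ} (hpos : ∀ k ∈ G, 1 ≤ k) (he : posE G % 2 = 1)
    (hw : posW G % 2 = 0) (hw0 : 0 < posW G) (hM : posW G < posM G) : Win G := by
  obtain ⟨k, R, rfl, hk, hMR⟩ := exists_top hpos hw0
  have hk1 := hpos k (by simp)
  have hs := heap_spec k hk1
  rw [posE_cons] at he
  rw [posW_cons] at hw hM
  rw [posM_cons] at hM
  by_cases hR0 : posW R = 0
  · have hR := pos_spec R fun x hx => hpos x (by simp [hx])
    have hM0 : posM R = 0 := by omega
    by_cases h9 : k = 9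
    · subst h9
      exact win_split _ 3 4 _ (by omega) (by omega) rfl
        (Or.inr (by simp [heapE, heapW, heapM, hR0, hM0] at he ⊢; omega))
    by_cases h10 : k = 10
    · subst h10
      exact win_split _ 4 4 _ (by omega) (by omega) rfl
        (Or.inr (by simp [heapE, heapW, heapM, hR0, hM0] at he ⊢; omega))
    by_cases h13 : k = 13
    · subst h13
      exact win_split _ 4 7 _ (by omega) (by omega) rfl
        (Or.inr (by simp [heapE, heapW, heapM, hR0, hM0] at he ⊢; omega))
    by_cases hodd : k % 2 = 1
    · have hs' := heap_spec (k - 1) (by omega)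
      refine win_one _ _ (by omega) ?_
      unfold heapE at *
      refine numP_high (by omega) ?_
      rcases hs with hs | hs | hs | hs | hs <;>
        rcases hs' with hs' | hs' | hs' | hs' | hs' <;> omega
    · have hs' := heap_spec (k - 3) (by omega)
      have h1 := heap_spec 1 (by omega)
      refine win_split _ 1 (k - 3) _ (by omega) (by omega) (by omega) ?_
      unfold heapE at *
      refine numP_high (by omega) ?_
      rcases hs with hs | hs | hs | hs | hs <;>
        rcases hs' with hs' | hs' | hs' | hs' | hs' <;> omega
  · obtain ⟨j, hj, hjw⟩ := exists_heapW_pos (G := R) (by omega)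
    obtain ⟨S, rfl⟩ := Multiset.exists_cons_of_mem hj
    have hj1 := hpos j (by simp)
    have hsj := heap_spec j hj1
    rw [Multiset.cons_swap]
    rw [posE_cons] at he
    rw [posW_cons] at hw hM
    rw [posM_cons] at hM hMR
    by_cases hodd : j % 2 = 1
    · have hs' := heap_spec (j - 1) (by omega)
      refine win_one _ _ (by omega) ?_
      rw [posE_cons, posW_cons, posM_cons]
      unfold heapE at *
      refine numP_high (by omega) ?_
      clear hs
      rcases hsj with hs | hs | hs | hs | hs <;>
        rcases hs' with hs' | hs' | hs' | hs' | hs' <;> omega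
    · have hs' := heap_spec (j - 3) (by omega)
      have h1 := heap_spec 1 (by omega)
      refine win_split _ 1 (j - 3) _ (by omega) (by omega) (by omega) ?_
      rw [posE_cons, posW_cons, posM_cons]
      unfold heapE at *
      refine numP_high (by omega) ?_
      clear hs
      rcases hsj with hs | hs | hs | hs | hs <;>
        rcases hs' with hs' | hs' | hs' | hs' | hs' <;> omega

/-- `e` odd, `w` odd, `w < M`: take one bean from an even heap, which keeps the weight and does not
lower the level. -/
lemma win_odd_odd_high {G : Multiset ℕ} (hpos : ∀ k ∈ G, 1 ≤ k) (he : posE G % 2 = 1)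
    (hw : posW G % 2 = 1) (hM : posW G < posM G) : Win G := by
  obtain ⟨k, hk, hk2⟩ := exists_even he
  have hk1 := hpos k hk
  obtain ⟨R, rfl⟩ := Multiset.exists_cons_of_mem hk
  have hs := heap_spec k hk1
  rw [posE_cons] at he
  rw [posW_cons] at hw hM
  rw [posM_cons] at hM
  have hs' := heap_spec (k - 1) (by omega)
  refine win_one _ _ (by omega) ?_
  unfold heapE at *
  refine numP_high (by omega) ?_
  rcases hs with hs | hs | hs | hs | hs <;>
    rcases hs' with hs' | hs' | hs' | hs' | hs' <;> omega

/-- `e` odd, `w` odd, `M ≤ w`: lower by one the weight of the top heap, splitting off `3` when it is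
even and its level equals the weight; if `w = 1`, reach `a`. -/
lemma win_odd_odd_low {G : Multiset ℕ} (hpos : ∀ k ∈ G, 1 ≤ k) (he : posE G % 2 = 1)
    (hw : posW G % 2 = 1) (hM : posM G ≤ posW G) : Win G := by
  obtain ⟨k, R, rfl, hk, hMR⟩ := exists_top hpos (by omega)
  have hk1 := hpos k (by simp)
  have hs := heap_spec k hk1
  have hR := pos_spec R fun x hx => hpos x (by simp [hx])
  rw [posE_cons] at he
  rw [posW_cons] at hw hM
  rw [posM_cons] at hM
  by_cases h1 : heapW k + posW R = 1
  · have hs' := heap_spec (k - 2) (by omega)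
    refine win_two _ _ (by omega) ?_
    unfold heapE at *
    refine numP_a (by omega) ?_
    rcases hs with hs | hs | hs | hs | hs <;>
      rcases hs' with hs' | hs' | hs' | hs' | hs' <;> omega
  by_cases hodd : k % 2 = 1
  · have hs' := heap_spec (k - 1) (by omega)
    refine win_one _ _ (by omega) ?_
    unfold heapE at *
    refine numP_low (by omega) ?_
    rcases hs with hs | hs | hs | hs | hs <;>
      rcases hs' with hs' | hs' | hs' | hs' | hs' <;> omega
  by_cases hlt : heapM k < heapW k + posW R
  · have hs' := heap_spec (k - 3) (by omega)
    have h1 := heap_spec 1 (by omega)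
    refine win_split _ 1 (k - 3) _ (by omega) (by omega) (by omega) ?_
    unfold heapE at *
    refine numP_low (by omega) ?_
    rcases hs with hs | hs | hs | hs | hs <;>
      rcases hs' with hs' | hs' | hs' | hs' | hs' <;> omega
  · have hs' := heap_spec (k - 5) (by omega)
    have h1 := heap_spec 3 (by omega)
    refine win_split _ 3 (k - 5) _ (by omega) (by omega) (by omega) ?_
    unfold heapE at *
    refine numP_low (by omega) ?_
    rcases hs with hs | hs | hs | hs | hs <;>
      rcases hs' with hs' | hs' | hs' | hs' | hs' <;> omega

lemma move_iff_exists (G : Multiset ℕ) : (∃ G', Move026 G G') ↔ ∃ k ∈ G, 2 ≤ k := by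
  constructor
  · rintro ⟨G', ⟨k, hk, h, -⟩ | ⟨k, hk, h, -⟩ | ⟨k, hk, h, -⟩⟩ <;> exact ⟨k, hk, by omega⟩
  · rintro ⟨k, hk, h⟩
    exact ⟨_, Or.inl ⟨k, hk, h, rfl⟩⟩

/-- A position with an N-value and at least one option has an option with a P-value. -/
lemma win_of_not_posP {G : Multiset ℕ} (hpos : ∀ k ∈ G, 1 ≤ k) (h : ¬ PosP G)
    (hm : ∃ k ∈ G, 2 ≤ k) : Win G := by
  unfold PosP NumP at h
  rcases Nat.mod_two_eq_zero_or_one (posE G) with he | he <;>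
  rcases Nat.mod_two_eq_zero_or_one (posW G) with hw | hw
  · rcases Nat.eq_zero_or_pos (posW G) with h0 | h0
    · exact win_of_weight_zero hpos he h0 hm
    · exact win_even_even hpos he hw h0 (by omega)
  · exact win_even_odd hpos he hw (by omega)
  · rcases le_or_gt (posM G) (posW G) with hM | hM
    · exact win_odd_even_low hpos he hw (by omega) hM
    · exact win_odd_even_high hpos he hw (by omega) hM
  · rcases le_or_gt (posM G) (posW G) with hM | hM
    · exact win_odd_odd_low hpos he hw hM
    · exact win_odd_odd_high hpos he hw hM

lemma exists_two_le_of_posP {G : Multiset ℕ} (hpos : ∀ k ∈ G, 1 ≤ k) (h : PosP G) :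
    ∃ k ∈ G, 2 ≤ k := by
  rcases Nat.eq_zero_or_pos (posW G) with h0 | h0
  · obtain ⟨k, hk, hk2⟩ := exists_even (G := G) (by unfold PosP NumP at h; omega)
    have := hpos k hk
    exact ⟨k, hk, by omega⟩
  · obtain ⟨k, hk, hw⟩ := exists_heapW_pos h0
    have hs := heap_spec k (hpos k hk)
    exact ⟨k, hk, by omega⟩

lemma move_sum_lt {G G' : Multiset ℕ} (hm : Move026 G G') : G'.sum < G.sum := by
  have key : ∀ k ∈ G, G.sum = k + (G.erase k).sum := fun k hk => by
    rw [← Multiset.sum_cons, Multiset.cons_erase hk]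
  rcases hm with ⟨k, hk, h2, rfl⟩ | ⟨k, hk, h2, rfl⟩ | ⟨k, hk, h2, i, j, hi, hj, hij, rfl⟩ <;>
    have := key k hk <;> simp only [Multiset.sum_cons] <;> omega

lemma move_pos {G G' : Multiset ℕ} (hpos : ∀ k ∈ G, 1 ≤ k) (hm : Move026 G G') :
    ∀ k ∈ G', 1 ≤ k := by
  have key : ∀ k, ∀ x ∈ G.erase k, 1 ≤ x := fun k x hx => hpos x (Multiset.mem_of_mem_erase hx)
  rcases hm with ⟨k, hk, h2, rfl⟩ | ⟨k, hk, h2, rfl⟩ | ⟨k, hk, h2, i, j, hi, hj, hij, rfl⟩ <;>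
    intro x hx <;> simp only [Multiset.mem_cons] at hx
  · rcases hx with rfl | hx
    · omega
    · exact key k x hx
  · rcases hx with rfl | hx
    · omega
    · exact key k x hx
  · rcases hx with rfl | rfl | hx
    · omega
    · omega
    · exact key k x hx

lemma pp_iff_posP (PP : Multiset ℕ → Prop)
    (hPP : ∀ G : Multiset ℕ,
      PP G ↔ ((∃ G', Move026 G G') ∧ ∀ G', Move026 G G' → ¬ PP G')) (n : ℕ) :
    ∀ G : Multiset ℕ, G.sum = n → (∀ k ∈ G, 1 ≤ k) → (PP G ↔ PosP G) := by
  induction n using Nat.strong_induction_on with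
  | _ n ih =>
    rintro G rfl hpos
    have ih' : ∀ G', Move026 G G' → (PP G' ↔ PosP G') := fun G' hm =>
      ih _ (move_sum_lt hm) G' rfl (move_pos hpos hm)
    rw [hPP, move_iff_exists]
    constructor
    · rintro ⟨hm, hall⟩
      by_contra hG
      obtain ⟨G', hm', hP⟩ := win_of_not_posP hpos hG hm
      exact hall G' hm' ((ih' G' hm').2 hP)
    · intro hG
      exact ⟨exists_two_le_of_posP hpos hG, fun G' hm' hP =>
        not_posP_of_move hpos hG hm' ((ih' G' hm').1 hP)⟩

/-! ### Normal forms in `Q` -/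

/-- Exponent of `a` contributed by a generator. -/
def genE : Gen026 → ℕ
  | .a => 1
  | .b => 0
  | .c _ => 0

/-- Weight of a generator. -/
def genW : Gen026 → ℕ
  | .a => 0
  | .b => 1
  | .c n => n + 2

/-- Level of a generator. -/
def genM : Gen026 → ℕ
  | .a => 0
  | .b => 0
  | .c n => 2 * n + 3

/-- Exponent of `a` in a word. -/
def wordE (x : FM026) : ℕ := (x.toAdd.map genE).sum

/-- Weight of a word. -/
def wordW (x : FM026) : ℕ := (x.toAdd.map genW).sum

/-- Level of a word. -/
def wordM (x : FM026) : ℕ := (x.toAdd.map genM).sup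

lemma wordE_mul (x y : FM026) : wordE (x * y) = wordE x + wordE y := by simp [wordE]
lemma wordW_mul (x y : FM026) : wordW (x * y) = wordW x + wordW y := by simp [wordW]
lemma wordM_mul (x y : FM026) : wordM (x * y) = max (wordM x) (wordM y) := by simp [wordM]
lemma wordE_one : wordE 1 = 0 := by simp [wordE]
lemma wordW_one : wordW 1 = 0 := by simp [wordW]
lemma wordM_one : wordM 1 = 0 := by simp [wordM]
lemma wordE_gen (g : Gen026) : wordE (fgen026 g) = genE g := by simp [wordE, fgen026]
lemma wordW_gen (g : Gen026) : wordW (fgen026 g) = genW g := by simp [wordW, fgen026]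
lemma wordM_gen (g : Gen026) : wordM (fgen026 g) = genM g := by simp [wordM, fgen026]

lemma word_fb_pow (m : ℕ) :
    wordE (fb ^ m) = 0 ∧ wordW (fb ^ m) = m ∧ wordM (fb ^ m) = 0 := by
  induction m with
  | zero => simp [wordE_one, wordW_one, wordM_one]
  | succ m ih =>
    rw [pow_succ, wordE_mul, wordW_mul, wordM_mul, ih.1, ih.2.1, ih.2.2, fb, wordE_gen, wordW_gen,
      wordM_gen]
    simp [genE, genW, genM]

/-- The congruence of words agreeing in the parity of the exponent of `a`, in the weight, and in the
level as far as it exceeds the weight. -/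
def invCon : Con FM026 where
  r x y := wordE x % 2 = wordE y % 2 ∧ wordW x = wordW y ∧
    max (wordM x) (wordW x) = max (wordM y) (wordW y)
  iseqv := ⟨fun _ => ⟨rfl, rfl, rfl⟩, fun h => ⟨h.1.symm, h.2.1.symm, h.2.2.symm⟩,
    fun h h' => ⟨h.1.trans h'.1, h.2.1.trans h'.2.1, h.2.2.trans h'.2.2⟩⟩
  mul' := by
    rintro x y z t ⟨h1, h2, h3⟩ ⟨h4, h5, h6⟩
    simp only [wordE_mul, wordW_mul, wordM_mul]
    omega

lemma invCon_iff (x y : FM026) : invCon x y ↔ wordE x % 2 = wordE y % 2 ∧ wordW x = wordW y ∧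
    max (wordM x) (wordW x) = max (wordM y) (wordW y) := Iff.rfl

lemma conGen_le_invCon : conGen rel026 ≤ invCon := by
  rw [Con.conGen_le]
  rintro x y (⟨rfl, rfl⟩ | ⟨n, rfl, rfl⟩ | ⟨m, n, hmn, rfl, rfl⟩)
  · rw [invCon_iff]
    simp [pow_two, wordE_mul, wordW_mul, wordM_mul, fa, wordE_gen, wordW_gen, wordM_gen,
      wordE_one, wordW_one, wordM_one, genE, genW, genM]
  · obtain ⟨h1, h2, h3⟩ := word_fb_pow (n + 1)
    obtain ⟨h4, h5, h6⟩ := word_fb_pow (2 * n + 3)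
    rw [invCon_iff]
    simp only [wordE_mul, wordW_mul, wordM_mul, h1, h2, h3, h4, h5, h6, fc, wordE_gen, wordW_gen,
      wordM_gen, genE, genW, genM, true_and]
    omega
  · obtain ⟨h1, h2, h3⟩ := word_fb_pow (m + 2)
    rw [invCon_iff]
    simp only [wordE_mul, wordW_mul, wordM_mul, h1, h2, h3, fc, wordE_gen, wordW_gen,
      wordM_gen, genE, genW, genM, true_and]
    omega

/-- The quotient map from words to `Q`. -/
def toQ : FM026 →* Q026 := (conGen rel026).mk'

lemma inv_of_toQ_eq {x y : FM026} (h : toQ x = toQ y) :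
    wordE x % 2 = wordE y % 2 ∧ wordW x = wordW y ∧
      max (wordM x) (wordW x) = max (wordM y) (wordW y) :=
  conGen_le_invCon ((Con.eq _).1 h)

lemma toQ_of_rel {x y : FM026} (h : rel026 x y) : toQ x = toQ y :=
  (Con.eq _).2 (ConGen.Rel.of _ _ h)

lemma toQ_fa : toQ fa = qa := rfl
lemma toQ_fb : toQ fb = qb := rfl
lemma toQ_fc (n : ℕ) : toQ (fc n) = qc n := rfl

lemma qa_sq : qa ^ 2 = 1 := by
  have := toQ_of_rel (Or.inl ⟨rfl, rfl⟩)
  rwa [map_pow, map_one] at this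

lemma qb_pow_mul_qc (n : ℕ) : qb ^ (n + 1) * qc n = qb ^ (2 * n + 3) := by
  have := toQ_of_rel (Or.inr (Or.inl ⟨n, rfl, rfl⟩))
  rwa [map_mul, map_pow, map_pow] at this

lemma qc_mul_qc {m n : ℕ} (h : m ≤ n) : qc m * qc n = qb ^ (m + 2) * qc n := by
  have := toQ_of_rel (Or.inr (Or.inr ⟨m, n, h, rfl, rfl⟩))
  rwa [map_mul, map_mul, map_pow] at this

lemma qb_pow_mul_qc_of_lt {p n : ℕ} (h : n < p) : qb ^ p * qc n = qb ^ (p + n + 2) := by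
  obtain ⟨d, rfl⟩ : ∃ d, p = d + (n + 1) := ⟨p - (n + 1), by omega⟩
  rw [pow_add, mul_assoc, qb_pow_mul_qc, ← pow_add]
  congr 1
  omega

/-- Every word equals a power of `a` times a normal form `b ^ w`, or `b ^ m * c n` with `m ≤ n`; the
level decides between the two. -/
lemma toQ_normal (x : FM026) :
    (wordM x ≤ wordW x ∧ toQ x = qa ^ wordE x * qb ^ wordW x) ∨
    (∃ m n, m ≤ n ∧ wordW x = m + n + 2 ∧ wordM x = 2 * n + 3 ∧
      toQ x = qa ^ wordE x * (qb ^ m * qc n)) := by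
  suffices H : ∀ s : Multiset Gen026,
      (wordM (.ofAdd s) ≤ wordW (.ofAdd s) ∧
        toQ (.ofAdd s) = qa ^ wordE (.ofAdd s) * qb ^ wordW (.ofAdd s)) ∨
      (∃ m n, m ≤ n ∧ wordW (.ofAdd s) = m + n + 2 ∧ wordM (.ofAdd s) = 2 * n + 3 ∧
        toQ (.ofAdd s) = qa ^ wordE (.ofAdd s) * (qb ^ m * qc n)) from H x.toAdd
  intro s
  induction s using Multiset.induction_on with
  | empty =>
    left
    change wordM 1 ≤ wordW 1 ∧ toQ 1 = qa ^ wordE 1 * qb ^ wordW 1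
    simp [wordE_one, wordW_one, wordM_one]
  | cons g s ih =>
    have hx : (Multiplicative.ofAdd (g ::ₘ s) : FM026) = fgen026 g * .ofAdd s := by
      rw [← Multiset.singleton_add, ofAdd_add]; rfl
    rw [hx]
    generalize (Multiplicative.ofAdd s : FM026) = y at ih ⊢
    rw [map_mul, wordE_mul, wordW_mul, wordM_mul, wordE_gen, wordW_gen, wordM_gen]
    cases g with
    | a =>
      change (_ ∧ qa * toQ y = _) ∨ (∃ m n, _ ∧ _ ∧ _ ∧ qa * toQ y = _)
      simp only [genE, genW, genM, zero_add, Nat.zero_max, pow_add, pow_one]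
      rcases ih with ⟨h1, h2⟩ | ⟨m, n, h1, h2, h3, h4⟩
      · exact Or.inl ⟨h1, by rw [h2, mul_assoc]⟩
      · exact Or.inr ⟨m, n, h1, h2, h3, by rw [h4, mul_assoc]⟩
    | b =>
      change (_ ∧ qb * toQ y = _) ∨ (∃ m n, _ ∧ _ ∧ _ ∧ qb * toQ y = _)
      simp only [genE, genW, genM, zero_add, Nat.zero_max]
      rcases ih with ⟨h1, h2⟩ | ⟨m, n, h1, h2, h3, h4⟩
      · exact Or.inl ⟨by omega, by rw [h2, pow_add, pow_one, mul_left_comm]⟩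
      · have hmul : qb * toQ y = qa ^ wordE y * (qb ^ (m + 1) * qc n) := by
          rw [h4, mul_left_comm, ← mul_assoc qb, ← pow_succ']
        by_cases hmn : m + 1 ≤ n
        · exact Or.inr ⟨m + 1, n, hmn, by omega, h3, hmul⟩
        · refine Or.inl ⟨by omega, ?_⟩
          rw [hmul, qb_pow_mul_qc_of_lt (by omega), h2]
          congr 2
          omega
    | c l =>
      change (_ ∧ qc l * toQ y = _) ∨ (∃ m n, _ ∧ _ ∧ _ ∧ qc l * toQ y = _)
      simp only [genE, genW, genM, zero_add]
      rcases ih with ⟨h1, h2⟩ | ⟨m, n, h1, h2, h3, h4⟩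
      · have hmul : qc l * toQ y = qa ^ wordE y * (qb ^ wordW y * qc l) := by
          rw [h2, mul_left_comm, mul_comm (qc l)]
        by_cases hwl : wordW y ≤ l
        · exact Or.inr ⟨wordW y, l, hwl, by omega, by omega, hmul⟩
        · refine Or.inl ⟨by omega, ?_⟩
          rw [hmul, qb_pow_mul_qc_of_lt (by omega)]
          congr 2
          omega
      · -- The product of two `c`'s is a power of `b` times the one of larger index.
        obtain ⟨p, q, hq, hp, hmul⟩ : ∃ p q, q = max l n ∧ p + q = m + l + n + 2 ∧
            qc l * toQ y = qa ^ wordE y * (qb ^ p * qc q) := by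
          rcases le_total l n with hl | hl
          · refine ⟨m + (l + 2), n, by omega, by omega, ?_⟩
            rw [h4, mul_left_comm, mul_left_comm (qc l), qc_mul_qc hl, ← mul_assoc (qb ^ m),
              ← pow_add]
          · refine ⟨m + (n + 2), l, by omega, by omega, ?_⟩
            rw [h4, mul_left_comm, mul_left_comm (qc l), mul_comm (qc l), qc_mul_qc hl,
              ← mul_assoc (qb ^ m), ← pow_add]
        by_cases hpq : p ≤ q
        · exact Or.inr ⟨p, q, hpq, by omega, by omega, hmul⟩
        · refine Or.inl ⟨by omega, ?_⟩
          rw [hmul, qb_pow_mul_qc_of_lt (by omega)]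
          congr 2
          omega

lemma qa_pow_even {e : ℕ} (h : e % 2 = 0) : qa ^ e = 1 := by
  obtain ⟨d, rfl⟩ : ∃ d, e = 2 * d := ⟨e / 2, by omega⟩
  rw [pow_mul, qa_sq, one_pow]

lemma qa_pow_odd {e : ℕ} (h : e % 2 = 1) : qa ^ e = qa := by
  obtain ⟨d, rfl⟩ : ∃ d, e = 2 * d + 1 := ⟨e / 2, by omega⟩
  rw [pow_succ, qa_pow_even (by omega), one_mul]

/-- Membership in the P-portion is decided by the exponent of `a`, the weight and the level. -/
lemma toQ_mem_P026 (x : FM026) : toQ x ∈ P026 ↔ NumP (wordE x) (wordW x) (wordM x) := by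
  constructor
  · rintro ((h | ⟨m, hm, h⟩) | ⟨m, n, hmn, hodd, h⟩)
    · obtain ⟨h1, h2, h3⟩ := inv_of_toQ_eq (y := fa) h
      simp only [fa, wordE_gen, wordW_gen, wordM_gen, genE, genW, genM] at h1 h2 h3
      exact Or.inl ⟨by omega, h2⟩
    · obtain ⟨h1, h2, h3⟩ := inv_of_toQ_eq (y := fb ^ (2 * m)) (by rw [h, map_pow, toQ_fb])
      obtain ⟨h4, h5, h6⟩ := word_fb_pow (2 * m)
      unfold NumP
      omega
    · obtain ⟨h1, h2, h3⟩ := inv_of_toQ_eq (y := fb ^ m * fc n)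
        (by rw [h, map_mul, map_pow, toQ_fb, toQ_fc])
      obtain ⟨h4, h5, h6⟩ := word_fb_pow m
      simp only [wordE_mul, wordW_mul, wordM_mul, fc, wordE_gen, wordW_gen, wordM_gen, genE, genW,
        genM] at h1 h2 h3
      unfold NumP
      omega
  · rintro (⟨he, hw⟩ | ⟨he, ⟨hw, hw1, hM⟩ | ⟨hw, hM⟩⟩)
    · rcases toQ_normal x with ⟨-, h⟩ | ⟨m, n, -, h, -⟩
      · rw [hw, qa_pow_odd he, pow_zero, mul_one] at h
        exact Or.inl (Or.inl h)
      · omega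
    · rcases toQ_normal x with ⟨-, h⟩ | ⟨m, n, h1, h2, h3, -⟩
      · refine Or.inl (Or.inr ⟨wordW x / 2, by omega, ?_⟩)
        rw [h, qa_pow_even he, one_mul]
        congr 1
        omega
      · omega
    · rcases toQ_normal x with ⟨h, -⟩ | ⟨m, n, h1, h2, h3, h⟩
      · omega
      · refine Or.inr ⟨m, n, h1, by omega, ?_⟩
        rw [h, qa_pow_even he, one_mul]

/-! ### Words of positions -/

/-- A word representing the value of a heap. -/
def heapWord (k : ℕ) : FM026 :=
  if k ≤ 8 then
    (if k % 4 = 1 then 1 else if k % 4 = 2 then fa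
     else if k % 4 = 3 then fb else fa * fb)
  else if k = 9 then fc 0
  else if k = 10 then fa * fc 0
  else if k % 2 = 1 then fc ((k - 9) / 2)
  else fa * fb * fc ((k - 12) / 2)

lemma toQ_heapWord (k : ℕ) : toQ (heapWord k) = phi026 k := by
  unfold heapWord phi026
  split_ifs <;> simp only [map_mul, map_one, toQ_fa, toQ_fb, toQ_fc]

lemma word_heapWord (k : ℕ) : wordE (heapWord k) = heapE k ∧ wordW (heapWord k) = heapW k ∧
    wordM (heapWord k) = heapM k := by
  unfold heapWord heapE heapW heapM
  split_ifs <;>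
    simp only [wordE_mul, wordW_mul, wordM_mul, wordE_one, wordW_one, wordM_one, fa, fb, fc,
      wordE_gen, wordW_gen, wordM_gen, genE, genW, genM, and_true, true_and] <;> omega

lemma Phi026_mem_iff (G : Multiset ℕ) : Phi026 G ∈ P026 ↔ PosP G := by
  have H : ∃ x : FM026, toQ x = Phi026 G ∧ wordE x = posE G ∧ wordW x = posW G ∧
      wordM x = posM G := by
    induction G using Multiset.induction_on with
    | empty => exact ⟨1, by simp [Phi026], wordE_one, wordW_one, wordM_one⟩
    | cons k R ih =>
      obtain ⟨x, h1, h2, h3, h4⟩ := ih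
      obtain ⟨h5, h6, h7⟩ := word_heapWord k
      refine ⟨heapWord k * x, ?_, ?_, ?_, ?_⟩
      · rw [map_mul, toQ_heapWord, h1]; simp [Phi026]
      · rw [wordE_mul, posE_cons, h2, h5]
      · rw [wordW_mul, posW_cons, h3, h6]
      · rw [wordM_mul, posM_cons, h4, h7]
  obtain ⟨x, h1, h2, h3, h4⟩ := H
  rw [← h1, toQ_mem_P026, h2, h3, h4, PosP]

/-- For every position `G` of 0.26 (a finite multiset of positive heap sizes,
including the empty position), `G` is a misère P-position iff `Φ(G) ∈ P`.
Here `PP` is the misère P-position predicate, characterized recursively: a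
position is a P-position iff it has at least one option and all options are
N-positions. -/
theorem phi026_correct
    (PP : Multiset ℕ → Prop)
    (hPP : ∀ G : Multiset ℕ,
      PP G ↔ ((∃ G', Move026 G G') ∧ ∀ G', Move026 G G' → ¬ PP G'))
    (G : Multiset ℕ) (hpos : ∀ k ∈ G, 1 ≤ k) :
    PP G ↔ Phi026 G ∈ P026 := by
  rw [Phi026_mem_iff]
  exact pp_iff_posP PP hPP _ G rfl hpos
end

section
/- In the octal game 4.7, the normal-play Grundy value of a single heap of size k is 2 if k is even and 1 if k is odd, for every k ≥ 1. -/
/-!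
Every heap of odd size behaves like a nim-heap of size 1, and every nonempty heap of even size
like a nim-heap of size 2. So the Grundy value of an arbitrary position is `a + 2 * b`, where `a`
and `b` are the parities of the number of odd heaps and of nonempty even heaps (`nimVal`). This is
proved for all positions at once: no move preserves `nimVal` (`nimVal_ne_of_move`), and every
smaller value is attained by a move (`exists_move_of_lt`). For the latter, an odd heap can be
replaced by a position of value 0 (delete it if it has size 1, otherwise leave `1` and `k - 2`),
and an even heap `k` by one of value 0 (split into `1` and `k - 1`) or of value 1 (leave `k - 1`).
The induction is on `weight`, the sum of `2 * k - 1` over all heaps `k`, which every move decreases.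
-/

/-- The minimum excludant of a set of naturals. -/
noncomputable def mex (s : Set ℕ) : ℕ := sInf {n | n ∉ s}

/-- One legal move in the octal game 4.7: split a heap into two nonempty heaps
removing no beans; or remove 1 bean, either removing the whole heap, leaving
one nonempty heap, or splitting the remainder into two nonempty heaps.
Positions are finite multisets of heap sizes. -/
def Move47 (G G' : Multiset ℕ) : Prop :=
  (∃ k ∈ G, ∃ i j : ℕ, 1 ≤ i ∧ 1 ≤ j ∧ i + j = k ∧ G' = i ::ₘ j ::ₘ G.erase k) ∨
  (1 ∈ G ∧ G' = G.erase 1) ∨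
  (∃ k ∈ G, 2 ≤ k ∧ G' = (k - 1) ::ₘ G.erase k) ∨
  (∃ k ∈ G, 3 ≤ k ∧ ∃ i j : ℕ, 1 ≤ i ∧ 1 ≤ j ∧ i + j = k - 1 ∧
    G' = i ::ₘ j ::ₘ G.erase k)

/-- The claimed Grundy value of a position: the parity of the number of odd heaps plus twice the
parity of the number of nonzero even heaps. Heaps of size 0 admit no move and contribute nothing. -/
def nimVal (G : Multiset ℕ) : ℕ :=
  G.countP (fun k => k % 2 = 1) % 2 + 2 * (G.countP (fun k => k % 2 = 0 ∧ k ≠ 0) % 2)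

/-- A quantity which every move decreases. The truncated subtraction gives heaps of size 0
weight 0. -/
def weight (G : Multiset ℕ) : ℕ := (G.map (fun k => 2 * k - 1)).sum

lemma weight_lt_of_move {G G' : Multiset ℕ} (h : Move47 G G') : weight G' < weight G := by
  rcases h with ⟨k, hk, i, j, hi, hj, hij, rfl⟩ | ⟨hk, rfl⟩ | ⟨k, hk, h2, rfl⟩ |
    ⟨k, hk, h3, i, j, hi, hj, hij, rfl⟩ <;>
  · obtain ⟨R, rfl⟩ := Multiset.exists_cons_of_mem hk
    simp only [weight, Multiset.erase_cons_head, Multiset.map_cons, Multiset.sum_cons]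
    omega

lemma nimVal_ne_of_move {G G' : Multiset ℕ} (h : Move47 G G') : nimVal G' ≠ nimVal G := by
  rcases h with ⟨k, hk, i, j, hi, hj, hij, rfl⟩ | ⟨hk, rfl⟩ | ⟨k, hk, h2, rfl⟩ |
    ⟨k, hk, h3, i, j, hi, hj, hij, rfl⟩ <;>
  · obtain ⟨R, rfl⟩ := Multiset.exists_cons_of_mem hk
    simp only [nimVal, Multiset.erase_cons_head, Multiset.countP_cons]
    split_ifs <;> omega

lemma not_even_one : ¬ (1 % 2 = 0 ∧ 1 ≠ 0) := by decide

/-- An odd heap admits a move toggling the low bit of `nimVal`. -/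
lemma exists_move_of_odd {G : Multiset ℕ} {k : ℕ} (hk : k ∈ G) (hodd : k % 2 = 1) :
    ∃ G', Move47 G G' ∧ nimVal G' % 2 ≠ nimVal G % 2 ∧ nimVal G' / 2 = nimVal G / 2 := by
  obtain ⟨R, rfl⟩ := Multiset.exists_cons_of_mem hk
  by_cases h1 : k = 1
  · subst h1
    refine ⟨R, Or.inr (Or.inl ⟨hk, by simp⟩), ?_⟩
    simp only [nimVal, Multiset.countP_cons, if_neg not_even_one]
    split_ifs <;> omega
  · refine ⟨1 ::ₘ (k - 2) ::ₘ R, Or.inr (Or.inr (Or.inr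
      ⟨k, hk, by omega, 1, k - 2, le_rfl, by omega, by omega, by simp⟩)), ?_⟩
    simp only [nimVal, Multiset.countP_cons, if_neg not_even_one]
    split_ifs <;> omega

/-- A nonempty even heap admits moves toggling the high bit of `nimVal` and setting the low bit
arbitrarily. -/
lemma exists_move_of_even {G : Multiset ℕ} {k : ℕ} (hk : k ∈ G) (heven : k % 2 = 0 ∧ k ≠ 0)
    (c : ℕ) (hc : c < 2) :
    ∃ G', Move47 G G' ∧ nimVal G' % 2 = c ∧ nimVal G' / 2 ≠ nimVal G / 2 := by
  obtain ⟨R, rfl⟩ := Multiset.exists_cons_of_mem hk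
  by_cases hlow : c = nimVal (k ::ₘ R) % 2
  · refine ⟨1 ::ₘ (k - 1) ::ₘ R, Or.inl
      ⟨k, hk, 1, k - 1, le_rfl, by omega, by omega, by simp⟩, ?_⟩
    simp only [nimVal, Multiset.countP_cons, if_neg not_even_one] at hlow ⊢
    split_ifs at hlow ⊢ <;> omega
  · refine ⟨(k - 1) ::ₘ R, Or.inr (Or.inr (Or.inl ⟨k, hk, by omega, by simp⟩)), ?_⟩
    simp only [nimVal, Multiset.countP_cons] at hlow ⊢
    split_ifs at hlow ⊢ <;> omega

lemma nimVal_lt_four (G : Multiset ℕ) : nimVal G < 4 := by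
  unfold nimVal
  omega

lemma exists_move_of_lt {G : Multiset ℕ} {n : ℕ} (hn : n < nimVal G) :
    ∃ G', Move47 G G' ∧ nimVal G' = n := by
  have h4 := nimVal_lt_four G
  by_cases hhigh : n / 2 = nimVal G / 2
  · -- Only the low bit drops, so it is set in `nimVal G` and an odd heap is present.
    have hpos : 0 < G.countP (fun k => k % 2 = 1) := by
      unfold nimVal at hn hhigh
      omega
    obtain ⟨k, hk, hodd⟩ := Multiset.countP_pos.mp hpos
    obtain ⟨G', hmove, h1, h2⟩ := exists_move_of_odd hk hodd
    exact ⟨G', hmove, by omega⟩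
  · -- The high bit drops, so a nonempty even heap is present.
    have hpos : 0 < G.countP (fun k => k % 2 = 0 ∧ k ≠ 0) := by
      unfold nimVal at hn hhigh
      omega
    obtain ⟨k, hk, heven⟩ := Multiset.countP_pos.mp hpos
    obtain ⟨G', hmove, h1, h2⟩ := exists_move_of_even hk heven (n % 2) (by omega)
    have h4' := nimVal_lt_four G'
    exact ⟨G', hmove, by omega⟩

lemma mex_eq {s : Set ℕ} {v : ℕ} (hv : v ∉ s) (hlt : ∀ n < v, n ∈ s) : mex s = v := by
  refine le_antisymm (Nat.sInf_le hv) ?_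
  by_contra! hcon
  have hmem : sInf {n | n ∉ s} ∈ {n | n ∉ s} := Nat.sInf_mem ⟨v, hv⟩
  exact hmem (hlt _ hcon)

lemma grundy_eq_nimVal (g : Multiset ℕ → ℕ)
    (hg : ∀ G : Multiset ℕ, g G = mex {m | ∃ G', Move47 G G' ∧ g G' = m})
    (G : Multiset ℕ) : g G = nimVal G := by
  induction hw : weight G using Nat.strong_induction_on generalizing G with
  | _ w ih =>
    have ih' : ∀ G', Move47 G G' → g G' = nimVal G' := fun G' h =>
      ih _ (hw ▸ weight_lt_of_move h) G' rfl
    rw [hg]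
    apply mex_eq
    · rintro ⟨G', hmove, hval⟩
      exact nimVal_ne_of_move hmove (ih' G' hmove ▸ hval)
    · intro n hn
      obtain ⟨G', hmove, hval⟩ := exists_move_of_lt hn
      exact ⟨G', hmove, (ih' G' hmove).trans hval⟩

/-- In the octal game 4.7, the normal-play Grundy value of a single heap of
size `k ≥ 1` is 2 if `k` is even and 1 if `k` is odd. The Grundy function is
characterized by the mex recursion. -/
theorem grundy47_single_heap
    (g : Multiset ℕ → ℕ)
    (hg : ∀ G : Multiset ℕ, g G = mex {m | ∃ G', Move47 G G' ∧ g G' = m}) :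
    ∀ k : ℕ, 1 ≤ k → g {k} = if k % 2 = 0 then 2 else 1 := by
  intro k hk
  rw [grundy_eq_nimVal g hg, ← Multiset.cons_zero]
  simp only [nimVal, Multiset.countP_cons, Multiset.countP_zero]
  split_ifs <;> omega
end
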